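/- Let φ : Γ₁ → Γ₂ be a finite flat morphism of degree n between graphs and F a field. Define F-linear maps T_V : V(Γ₂,F) → V(Γ₁,F) by T_V(v') = Σ_{v ∈ φ_V^{-1}(v')} n_v · v and T : E(Γ₂,F) → E(Γ₁,F) by T(e') = Σ_{e ∈ φ_E^{-1}(e')} n_e · e (the latter well defined since n_{ē} = n_e and φ_E(ē) = φ_E(e)‾). Then d ∘ T = T_V ∘ d. Consequently T maps H_1(Γ₂,F) = Ker(d) into H_1(Γ₁,F), and so defines an F-linear map φ^* : H_1(Γ₂,F) → H_1(Γ₁,F). -/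

import Mathlib

/-- A graph: a finite directed multigraph with a fixed-point-free orientation-reversing
involution `bar` on the set of oriented edges. -/
structure BarGraph where
  V : Type
  E : Type
  [fintV : Fintype V]
  [fintE : Fintype E]
  [decV : DecidableEq V]
  [decE : DecidableEq E]
  s : E → V
  t : E → V
  bar : E → E
  bar_ne : ∀ e, bar e ≠ e
  bar_bar : ∀ e, bar (bar e) = e
  s_bar : ∀ e, s (bar e) = t e
  t_bar : ∀ e, t (bar e) = s e

attribute [instance] BarGraph.fintV BarGraph.fintE BarGraph.decV BarGraph.decE

/-- `V(Γ,F)`: the `F`-vector space with basis the vertices of `Γ`. -/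
abbrev BarGraph.VVec (Γ : BarGraph) (F : Type) [Field F] : Type := Γ.V → F

/-- The subspace of relations `ē = -e`, i.e. spanned by the elements `e + ē`. -/
def BarGraph.rel (Γ : BarGraph) (F : Type) [Field F] : Submodule F (Γ.E → F) :=
  Submodule.span F {x | ∃ e : Γ.E, x = Pi.single e 1 + Pi.single (Γ.bar e) 1}

/-- `E(Γ,F)`: the quotient of the `F`-vector space with basis the oriented edges of `Γ`
by the relations `ē = -e`. -/
abbrev BarGraph.EVec (Γ : BarGraph) (F : Type) [Field F] : Type := (Γ.E → F) ⧸ Γ.rel F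

/-- The class of an oriented edge `e` in `E(Γ,F)`. -/
def BarGraph.edgeCls (Γ : BarGraph) (F : Type) [Field F] (e : Γ.E) : Γ.EVec F :=
  Submodule.Quotient.mk (Pi.single e 1)

/-- The boundary map on the free module: `e ↦ t(e) - s(e)`. -/
def BarGraph.d0 (Γ : BarGraph) (F : Type) [Field F] : (Γ.E → F) →ₗ[F] Γ.VVec F :=
  ∑ e : Γ.E, (LinearMap.proj e : (Γ.E → F) →ₗ[F] F).smulRight
    (Pi.single (Γ.t e) 1 - Pi.single (Γ.s e) 1)

lemma BarGraph.d0_single (Γ : BarGraph) (F : Type) [Field F] (e : Γ.E) :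
    Γ.d0 F (Pi.single e 1) = Pi.single (Γ.t e) 1 - Pi.single (Γ.s e) 1 := by
  classical
  simp only [BarGraph.d0, LinearMap.sum_apply, LinearMap.smulRight_apply, LinearMap.proj_apply]
  rw [Finset.sum_eq_single e]
  · simp
  · intro b _ hb
    rw [Pi.single_eq_of_ne hb, zero_smul]
  · simp

/-- The map `d : E(Γ,F) → V(Γ,F)`, `e ↦ t(e) - s(e)`. -/
def BarGraph.dMap (Γ : BarGraph) (F : Type) [Field F] : Γ.EVec F →ₗ[F] Γ.VVec F :=
  Submodule.liftQ (Γ.rel F) (Γ.d0 F) (by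
    rw [BarGraph.rel, Submodule.span_le]
    rintro x ⟨e, rfl⟩
    simp only [SetLike.mem_coe, LinearMap.mem_ker, map_add, BarGraph.d0_single,
      Γ.s_bar, Γ.t_bar]
    abel)

lemma BarGraph.dMap_edgeCls (Γ : BarGraph) (F : Type) [Field F] (e : Γ.E) :
    Γ.dMap F (Γ.edgeCls F e) = Pi.single (Γ.t e) 1 - Pi.single (Γ.s e) 1 := by
  simpa [BarGraph.dMap, BarGraph.edgeCls] using Γ.d0_single F e

/-- The map `δ : V(Γ,F) → E(Γ,F)`, `v ↦ ∑_{e : t(e) = v} e`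
(the class of the function `e ↦ g (t e)` for `g ∈ V(Γ,F)`). -/
def BarGraph.deltaMap (Γ : BarGraph) (F : Type) [Field F] : Γ.VVec F →ₗ[F] Γ.EVec F :=
  (Γ.rel F).mkQ ∘ₗ LinearMap.funLeft F F Γ.t

lemma BarGraph.deltaMap_single (Γ : BarGraph) (F : Type) [Field F] (v : Γ.V) :
    Γ.deltaMap F (Pi.single v 1) =
      ∑ e ∈ Finset.univ.filter (fun e => Γ.t e = v), Γ.edgeCls F e := by
  classical
  simp only [BarGraph.deltaMap, LinearMap.coe_comp, Function.comp_apply, BarGraph.edgeCls,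
    ← Submodule.mkQ_apply]
  rw [← map_sum]
  congr 1
  funext e
  rw [Finset.sum_apply, Finset.sum_filter]
  simp only [LinearMap.funLeft_apply]
  have key : ∀ e' : Γ.E, (if Γ.t e' = v then ((Pi.single e' (1:F) : Γ.E → F) e) else 0)
      = (if e' = e then (if Γ.t e = v then (1:F) else 0) else 0) := by
    intro e'
    by_cases h1 : e' = e <;> by_cases h2 : Γ.t e' = v <;> simp_all [Pi.single_apply]
  rw [Finset.sum_congr rfl (fun e' _ => key e'),
    Finset.sum_ite_eq' Finset.univ e (fun _ => if Γ.t e = v then (1:F) else 0)]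
  simp [Pi.single_apply]
/-- A cycle in a graph `Γ`: a nonempty closed walk, encoded as a cyclically indexed
sequence of oriented edges `seq : ZMod len → Γ.E` with `t (seq i) = s (seq (i+1))`. -/
structure GraphCycle (Γ : BarGraph) where
  len : ℕ
  len_pos : 0 < len
  seq : ZMod len → Γ.E
  closed : ∀ i, Γ.t (seq i) = Γ.s (seq (i + 1))

/-- The class `e₁ + ⋯ + e_m ∈ E(Γ,F)` of a cycle. -/
def GraphCycle.cls {Γ : BarGraph} (R : GraphCycle Γ) (F : Type) [Field F] : Γ.EVec F :=
  haveI : NeZero R.len := ⟨R.len_pos.ne'⟩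
  ∑ i : ZMod R.len, Γ.edgeCls F (R.seq i)

/-- The multiplicity `m_R(e)`: the number of times the cycle `R` traverses the
oriented edge `e`. -/
def GraphCycle.mult {Γ : BarGraph} (R : GraphCycle Γ) (e : Γ.E) : ℕ :=
  haveI : NeZero R.len := ⟨R.len_pos.ne'⟩
  (Finset.univ.filter (fun i : ZMod R.len => R.seq i = e)).card

/-- The set of oriented edges traversed by a cycle. -/
def GraphCycle.edgeSet {Γ : BarGraph} (R : GraphCycle Γ) : Set Γ.E :=
  {e | ∃ i, R.seq i = e}

/-- The set of vertices visited by a cycle. -/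
def GraphCycle.vertexSet {Γ : BarGraph} (R : GraphCycle Γ) : Set Γ.V :=
  {v | ∃ i, Γ.s (R.seq i) = v}

/-- The cycle obtained by traversing `R` `d` consecutive times. -/
def GraphCycle.pow {Γ : BarGraph} (R : GraphCycle Γ) (d : ℕ) (hd : 0 < d) : GraphCycle Γ where
  len := d * R.len
  len_pos := Nat.mul_pos hd R.len_pos
  seq := fun i => R.seq (ZMod.castHom (dvd_mul_left R.len d) (ZMod R.len) i)
  closed := fun i => by rw [map_add, map_one]; exact R.closed _

/-- Two cycles coincide up to cyclic rotation. -/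
def CyclicRotation {Γ : BarGraph} (C D : GraphCycle Γ) : Prop :=
  C.len = D.len ∧ ∃ k : ℕ, ∀ j : ℕ, C.seq (j : ZMod C.len) = D.seq ((j + k : ℕ) : ZMod D.len)

/-- A finite flat morphism of degree `n` between graphs. -/
structure FFMor (Γ₁ Γ₂ : BarGraph) (n : ℕ) where
  vMap : Γ₁.V → Γ₂.V
  eMap : Γ₁.E → Γ₂.E
  vMap_surj : Function.Surjective vMap
  eMap_surj : Function.Surjective eMap
  s_comm : ∀ e, vMap (Γ₁.s e) = Γ₂.s (eMap e)
  t_comm : ∀ e, vMap (Γ₁.t e) = Γ₂.t (eMap e)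
  bar_comm : ∀ e, eMap (Γ₁.bar e) = Γ₂.bar (eMap e)
  vMult : Γ₁.V → ℕ
  eMult : Γ₁.E → ℕ
  vMult_pos : ∀ v, 0 < vMult v
  eMult_pos : ∀ e, 0 < eMult e
  eMult_bar : ∀ e, eMult (Γ₁.bar e) = eMult e
  fiber_s_surj : ∀ e' : Γ₂.E, ∀ v : Γ₁.V, vMap v = Γ₂.s e' →
    ∃ e : Γ₁.E, eMap e = e' ∧ Γ₁.s e = v
  sum_fiber : ∀ e' : Γ₂.E,
    ∑ e ∈ Finset.univ.filter (fun e => eMap e = e'), eMult e = n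
  sum_fiber_source : ∀ e' : Γ₂.E, ∀ v : Γ₁.V, vMap v = Γ₂.s e' →
    ∑ e ∈ Finset.univ.filter (fun e => eMap e = e' ∧ Γ₁.s e = v), eMult e = vMult v

/-- The image closed walk `φ(R)` of a cycle `R` under a finite flat morphism `φ`. -/
def FFMor.mapCycle {Γ₁ Γ₂ : BarGraph} {n : ℕ} (φ : FFMor Γ₁ Γ₂ n) (R : GraphCycle Γ₁) :
    GraphCycle Γ₂ where
  len := R.len
  len_pos := R.len_pos
  seq := fun i => φ.eMap (R.seq i)
  closed := fun i => by rw [← φ.t_comm, R.closed, φ.s_comm]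

lemma BarGraph.edgeCls_add_edgeCls_bar (Γ : BarGraph) (F : Type) [Field F] (e : Γ.E) :
    Γ.edgeCls F e + Γ.edgeCls F (Γ.bar e) = 0 := by
  rw [BarGraph.edgeCls, BarGraph.edgeCls, ← Submodule.Quotient.mk_add,
    Submodule.Quotient.mk_eq_zero]
  exact Submodule.subset_span ⟨e, rfl⟩

namespace FFMor

variable {Γ₁ Γ₂ : BarGraph} {n : ℕ} (φ : FFMor Γ₁ Γ₂ n)

/-- Reversing edges identifies the fiber over `ē'` with the fiber over `e'`. -/
lemma sum_fiber_bar {M : Type*} [AddCommMonoid M] (e' : Γ₂.E) (f : Γ₁.E → M) :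
    ∑ e ∈ Finset.univ.filter (fun e => φ.eMap e = Γ₂.bar e'), f e =
      ∑ e ∈ Finset.univ.filter (fun e => φ.eMap e = e'), f (Γ₁.bar e) := by
  refine Finset.sum_nbij' Γ₁.bar Γ₁.bar ?_ ?_ ?_ ?_ ?_ <;>
    simp +contextual [φ.bar_comm, Γ₁.bar_bar, Γ₂.bar_bar]

variable (F : Type) [Field F]

/-- The map `v' ↦ ∑ n_v • v`, the sum being over the vertices `v` above `v'`. -/
noncomputable def vertexPullback : Γ₂.VVec F →ₗ[F] Γ₁.VVec F :=
  (Pi.basisFun F Γ₂.V).constr F fun v' =>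
    ∑ v ∈ Finset.univ.filter (fun v => φ.vMap v = v'),
      (φ.vMult v : F) • (Pi.single v 1 : Γ₁.VVec F)

lemma vertexPullback_single (v' : Γ₂.V) :
    φ.vertexPullback F (Pi.single v' 1) =
      ∑ v ∈ Finset.univ.filter (fun v => φ.vMap v = v'),
        (φ.vMult v : F) • (Pi.single v 1 : Γ₁.VVec F) := by
  rw [vertexPullback, ← Pi.basisFun_apply, Module.Basis.constr_basis]

/-- The map `e' ↦ ∑ n_e • e` on the free module on oriented edges, the sum being over the
edges `e` above `e'`. -/
noncomputable def freeEdgePullback : (Γ₂.E → F) →ₗ[F] Γ₁.EVec F :=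
  (Pi.basisFun F Γ₂.E).constr F fun e' =>
    ∑ e ∈ Finset.univ.filter (fun e => φ.eMap e = e'), (φ.eMult e : F) • Γ₁.edgeCls F e

lemma freeEdgePullback_single (e' : Γ₂.E) :
    φ.freeEdgePullback F (Pi.single e' 1) =
      ∑ e ∈ Finset.univ.filter (fun e => φ.eMap e = e'), (φ.eMult e : F) • Γ₁.edgeCls F e := by
  rw [freeEdgePullback, ← Pi.basisFun_apply, Module.Basis.constr_basis]

lemma rel_le_ker_freeEdgePullback : Γ₂.rel F ≤ LinearMap.ker (φ.freeEdgePullback F) := by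
  rw [BarGraph.rel, Submodule.span_le]
  rintro _ ⟨e', rfl⟩
  rw [SetLike.mem_coe, LinearMap.mem_ker, map_add, freeEdgePullback_single,
    freeEdgePullback_single, sum_fiber_bar, ← Finset.sum_add_distrib]
  refine Finset.sum_eq_zero fun e _ => ?_
  rw [φ.eMult_bar, ← smul_add, BarGraph.edgeCls_add_edgeCls_bar, smul_zero]

/-- The map `e' ↦ ∑ n_e • e` on `E(Γ₂,F)`. -/
noncomputable def edgePullback : Γ₂.EVec F →ₗ[F] Γ₁.EVec F :=
  (Γ₂.rel F).liftQ (φ.freeEdgePullback F) (φ.rel_le_ker_freeEdgePullback F)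

lemma edgePullback_edgeCls (e' : Γ₂.E) :
    φ.edgePullback F (Γ₂.edgeCls F e') =
      ∑ e ∈ Finset.univ.filter (fun e => φ.eMap e = e'), (φ.eMult e : F) • Γ₁.edgeCls F e :=
  φ.freeEdgePullback_single F e'

lemma sum_fiber_smul_single_source (e' : Γ₂.E) :
    ∑ e ∈ Finset.univ.filter (fun e => φ.eMap e = e'),
        (φ.eMult e : F) • (Pi.single (Γ₁.s e) 1 : Γ₁.VVec F) =
      φ.vertexPullback F (Pi.single (Γ₂.s e') 1) := by
  rw [vertexPullback_single, ← Finset.sum_fiberwise_of_maps_to (g := Γ₁.s)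
    (t := Finset.univ.filter fun v => φ.vMap v = Γ₂.s e')]
  · refine Finset.sum_congr rfl fun v hv => ?_
    rw [← φ.sum_fiber_source e' v (Finset.mem_filter.mp hv).2, Nat.cast_sum, Finset.sum_smul,
      Finset.filter_filter]
    refine Finset.sum_congr rfl fun e he => ?_
    rw [(Finset.mem_filter.mp he).2.2]
  · simp +contextual [φ.s_comm]

lemma sum_fiber_smul_single_target (e' : Γ₂.E) :
    ∑ e ∈ Finset.univ.filter (fun e => φ.eMap e = e'),
        (φ.eMult e : F) • (Pi.single (Γ₁.t e) 1 : Γ₁.VVec F) =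
      φ.vertexPullback F (Pi.single (Γ₂.t e') 1) := by
  rw [← Γ₂.s_bar, ← sum_fiber_smul_single_source, sum_fiber_bar]
  simp only [φ.eMult_bar, Γ₁.s_bar]

theorem dMap_comp_edgePullback :
    Γ₁.dMap F ∘ₗ φ.edgePullback F = φ.vertexPullback F ∘ₗ Γ₂.dMap F := by
  refine Submodule.linearMap_qext _ ((Pi.basisFun F Γ₂.E).ext fun e' => ?_)
  rw [Pi.basisFun_apply]
  change Γ₁.dMap F (φ.edgePullback F (Γ₂.edgeCls F e')) =
    φ.vertexPullback F (Γ₂.dMap F (Γ₂.edgeCls F e'))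
  simp only [edgePullback_edgeCls, map_sum, map_smul, BarGraph.dMap_edgeCls, smul_sub,
    Finset.sum_sub_distrib, map_sub, sum_fiber_smul_single_source,
    sum_fiber_smul_single_target]

end FFMor

/-- the `F`-linear maps `T_V : V(Γ₂,F) → V(Γ₁,F)`,
`T_V(v') = ∑_{v ∈ φ_V⁻¹(v')} n_v • v`, and `T : E(Γ₂,F) → E(Γ₁,F)`,
`T(e') = ∑_{e ∈ φ_E⁻¹(e')} n_e • e` (well defined), satisfy `d ∘ T = T_V ∘ d`;
consequently `T` maps `H_1(Γ₂,F) = Ker d` into `H_1(Γ₁,F)`, defining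
`φ^* : H_1(Γ₂,F) → H_1(Γ₁,F)`. -/
theorem statement8 (Γ₁ Γ₂ : BarGraph) (n : ℕ) (φ : FFMor Γ₁ Γ₂ n) (F : Type) [Field F] :
    ∃ (TV : Γ₂.VVec F →ₗ[F] Γ₁.VVec F) (T : Γ₂.EVec F →ₗ[F] Γ₁.EVec F),
      (∀ v' : Γ₂.V, TV (Pi.single v' 1) =
        ∑ v ∈ Finset.univ.filter (fun v => φ.vMap v = v'),
          (φ.vMult v : F) • (Pi.single v 1 : Γ₁.VVec F)) ∧
      (∀ e' : Γ₂.E, T (Γ₂.edgeCls F e') =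
        ∑ e ∈ Finset.univ.filter (fun e => φ.eMap e = e'),
          (φ.eMult e : F) • Γ₁.edgeCls F e) ∧
      Γ₁.dMap F ∘ₗ T = TV ∘ₗ Γ₂.dMap F ∧
      (∀ x ∈ LinearMap.ker (Γ₂.dMap F), T x ∈ LinearMap.ker (Γ₁.dMap F)) := by
  refine ⟨φ.vertexPullback F, φ.edgePullback F, φ.vertexPullback_single F,
    φ.edgePullback_edgeCls F, φ.dMap_comp_edgePullback F, fun x hx => ?_⟩
  rw [LinearMap.mem_ker] at hx ⊢
  rw [← LinearMap.comp_apply, φ.dMap_comp_edgePullback, LinearMap.comp_apply, hx, map_zero]
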